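/- Let I and J be finite sets, E ⊆ I × J, and let c, c' : I → ℕ be capacity functions with c(i) ≤ c'(i) + 1 for every i ∈ I. Suppose there exists a B-matching with respect to (E, c) covering every item of J, and let M be a maximum B-matching with respect to (E, c'). Let U ⊆ J be the set of items not covered by M, and let N(U) ⊆ I be the set of buyers i such that there exists an M-augmenting path from i to some item of U. Then |U| ≤ |N(U)|. -/

import Mathlib

open Finset
open scoped Classical

/-- `M` is a B-matching with respect to edges `E` and capacities `c`:
`M ⊆ E`, every buyer `i` is incident to at most `c i` edges of `M`, and every
item is incident to at most one edge of `M`. -/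
def IsBMatching {I J : Type*} [DecidableEq I] [DecidableEq J]
    (E M : Finset (I × J)) (c : I → ℕ) : Prop :=
  M ⊆ E ∧ (∀ i : I, (M.filter (fun e => e.1 = i)).card ≤ c i) ∧
    (∀ j : J, (M.filter (fun e => e.2 = j)).card ≤ 1)

/-- An `M`-augmenting path from buyer `i` to item `j`: a sequence
`y_0, z_0, …, y_h, z_h` of pairwise-distinct buyers and pairwise-distinct items
with `y_0 = i`, `z_h = j`, `(y_k, z_k) ∈ E \ M` for all `k`, and
`(z_k, y_{k+1}) ∈ M` for all `k < h`. -/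
def IsAugPath {I J : Type*} (E M : Finset (I × J)) (i : I) (j : J) : Prop :=
  ∃ (h : ℕ) (y : Fin (h + 1) → I) (z : Fin (h + 1) → J),
    Function.Injective y ∧ Function.Injective z ∧
    y 0 = i ∧ z (Fin.last h) = j ∧
    (∀ k, (y k, z k) ∈ E ∧ (y k, z k) ∉ M) ∧
    (∀ k : Fin h, (y k.succ, z k.castSucc) ∈ M)

/-!
Let `N` be the set of buyers from which an `M`-augmenting path leads to an uncovered item. Flipping
such a path would enlarge `M` if its first buyer had spare capacity, so every buyer in `N` is
saturated by `M`. On the other hand, an edge of `E` whose buyer is outside `N` ends at an item which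
`M` assigns to a buyer outside `N`, for otherwise the edge would extend an augmenting path. Hence
any B-matching `M₀` has at most as many edges as `M` outside `N`, and inside `N` its surplus over
`M` is at most the total excess of its capacities over those of `M`. A B-matching has as many edges
as it covers items, so this compares the numbers of uncovered items.
-/

section Paths

variable {I J : Type*} {E M : Finset (I × J)}

/-- The sequence `y 0, z 0, …, y h, z h` is an `M`-alternating path, starting and ending with an
edge outside `M`. This is `IsAugPath` with the path itself, instead of its two ends, as the data,
so that paths can be cut and extended. -/
structure IsAltPath (E M : Finset (I × J)) {h : ℕ} (y : Fin (h + 1) → I) (z : Fin (h + 1) → J) :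
    Prop where
  injective_fst : Function.Injective y
  injective_snd : Function.Injective z
  mem_edges : ∀ k, (y k, z k) ∈ E
  notMem : ∀ k, (y k, z k) ∉ M
  mem : ∀ k : Fin h, (y k.succ, z k.castSucc) ∈ M

theorem isAugPath_iff_exists_isAltPath {i : I} {j : J} :
    IsAugPath E M i j ↔ ∃ (h : ℕ) (y : Fin (h + 1) → I) (z : Fin (h + 1) → J),
      IsAltPath E M y z ∧ y 0 = i ∧ z (Fin.last h) = j := by
  constructor
  · rintro ⟨h, y, z, hy, hz, hi, hj, hE, hM⟩
    exact ⟨h, y, z, ⟨hy, hz, fun k => (hE k).1, fun k => (hE k).2, hM⟩, hi, hj⟩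
  · rintro ⟨h, y, z, hp, hi, hj⟩
    exact ⟨h, y, z, hp.injective_fst, hp.injective_snd, hi, hj,
      fun k => ⟨hp.mem_edges k, hp.notMem k⟩, hp.mem⟩

theorem IsAltPath.tail {h : ℕ} {y : Fin (h + 2) → I} {z : Fin (h + 2) → J}
    (hp : IsAltPath E M y z) : IsAltPath E M (Fin.tail y) (Fin.tail z) where
  injective_fst := hp.injective_fst.comp (Fin.succ_injective _)
  injective_snd := hp.injective_snd.comp (Fin.succ_injective _)
  mem_edges k := hp.mem_edges k.succ
  notMem k := hp.notMem k.succ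
  mem k := hp.mem k.succ

theorem IsAltPath.cons {h : ℕ} {y : Fin (h + 1) → I} {z : Fin (h + 1) → J} {i : I} {t : J}
    (hp : IsAltPath E M y z) (hi : i ∉ Set.range y) (ht : t ∉ Set.range z)
    (hE : (i, t) ∈ E) (hM : (i, t) ∉ M) (hmem : (y 0, t) ∈ M) :
    IsAltPath E M (Fin.cons i y : Fin (h + 2) → I) (Fin.cons t z : Fin (h + 2) → J) where
  injective_fst := Fin.cons_injective_iff.2 ⟨hi, hp.injective_fst⟩
  injective_snd := Fin.cons_injective_iff.2 ⟨ht, hp.injective_snd⟩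
  mem_edges := Fin.cases hE hp.mem_edges
  notMem := Fin.cases hM hp.notMem
  mem := Fin.cases hmem hp.mem

theorem IsAltPath.isAugPath {h : ℕ} {y : Fin (h + 1) → I} {z : Fin (h + 1) → J}
    (hp : IsAltPath E M y z) (k : Fin (h + 1)) : IsAugPath E M (y k) (z (Fin.last h)) := by
  induction h with
  | zero =>
    rw [Fin.fin_one_eq_zero k]
    exact isAugPath_iff_exists_isAltPath.2 ⟨0, y, z, hp, rfl, rfl⟩
  | succ h ih =>
    cases k using Fin.cases with
    | zero => exact isAugPath_iff_exists_isAltPath.2 ⟨h + 1, y, z, hp, rfl, rfl⟩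
    | succ k => exact ih hp.tail k

theorem IsAugPath.of_notMem {i : I} {j : J} (hE : (i, j) ∈ E) (hM : (i, j) ∉ M) :
    IsAugPath E M i j :=
  have : Subsingleton (Fin (0 + 1)) := Fin.subsingleton_one
  ⟨0, fun _ => i, fun _ => j, Function.injective_of_subsingleton _,
    Function.injective_of_subsingleton _, rfl, rfl, fun _ => ⟨hE, hM⟩, fun k => k.elim0⟩

theorem IsAugPath.cons {i n : I} {t j : J} (hinj : Set.InjOn Prod.snd (M : Set (I × J)))
    (hp : IsAugPath E M n j) (hj : ∀ e ∈ M, e.2 ≠ j)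
    (hn : (n, t) ∈ M) (hE : (i, t) ∈ E) (hM : (i, t) ∉ M) : IsAugPath E M i j := by
  obtain ⟨h, y, z, hyz, rfl, rfl⟩ := isAugPath_iff_exists_isAltPath.1 hp
  by_cases hi : i ∈ Set.range y
  · obtain ⟨k, rfl⟩ := hi
    exact hyz.isAugPath k
  have ht : t ∉ Set.range z := by
    rintro ⟨k, rfl⟩
    cases k using Fin.lastCases with
    | last => exact hj _ hn rfl
    | cast k =>
      have hy : y 0 = y k.succ := congrArg Prod.fst (hinj hn (hyz.mem k) rfl)
      exact Fin.succ_ne_zero k (hyz.injective_fst hy).symm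
  exact (hyz.cons hi ht hE hM hn).isAugPath 0

end Paths

section Sources

variable {I J : Type*} [DecidableEq I] {E M M₀ : Finset (I × J)}

/-- The set `N(U)` of buyers from which some `M`-augmenting path leads to an uncovered item. It is
cut out of the buyers incident to `E`, where every augmenting path starts, so that it is finite for
an arbitrary type of buyers. -/
noncomputable def augSources (E M : Finset (I × J)) : Finset I :=
  {i ∈ E.image Prod.fst | ∃ j, (∀ e ∈ M, e.2 ≠ j) ∧ IsAugPath E M i j}

theorem mem_augSources {i : I} :
    i ∈ augSources E M ↔ ∃ j, (∀ e ∈ M, e.2 ≠ j) ∧ IsAugPath E M i j := by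
  refine mem_filter.trans (and_iff_right_of_imp ?_)
  rintro ⟨j, -, h, y, z, -, -, rfl, -, hE, -⟩
  exact mem_image_of_mem Prod.fst (hE 0).1

theorem exists_notMem_augSources {i : I} {t : J}
    (hinj : Set.InjOn Prod.snd (M : Set (I × J))) (hE : (i, t) ∈ E) (hi : i ∉ augSources E M) :
    ∃ n ∉ augSources E M, (n, t) ∈ M := by
  by_cases hiM : (i, t) ∈ M
  · exact ⟨i, hi, hiM⟩
  obtain ⟨⟨n, _⟩, hn, rfl⟩ : ∃ e ∈ M, e.2 = t := by
    by_contra! ht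
    exact hi (mem_augSources.2 ⟨t, ht, .of_notMem hE hiM⟩)
  refine ⟨n, fun hnN => hi ?_, hn⟩
  obtain ⟨j, hj, hp⟩ := mem_augSources.1 hnN
  exact mem_augSources.2 ⟨j, hj, hp.cons hinj hj hn hE hiM⟩

theorem card_filter_notMem_augSources_le (hinj : Set.InjOn Prod.snd (M : Set (I × J)))
    (hE₀ : M₀ ⊆ E) (hinj₀ : Set.InjOn Prod.snd (M₀ : Set (I × J))) :
    #{e ∈ M₀ | e.1 ∉ augSources E M} ≤ #{e ∈ M | e.1 ∉ augSources E M} := by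
  have hsub : {e ∈ M₀ | e.1 ∉ augSources E M}.image Prod.snd ⊆
      {e ∈ M | e.1 ∉ augSources E M}.image Prod.snd := by
    simp only [image_subset_iff, mem_filter, mem_image]
    rintro ⟨i, t⟩ ⟨he, hi⟩
    obtain ⟨n, hn, hnt⟩ := exists_notMem_augSources hinj (hE₀ he) hi
    exact ⟨(n, t), ⟨hnt, hn⟩, rfl⟩
  rw [← card_image_of_injOn (hinj₀.mono (filter_subset _ _))]
  exact (card_le_card hsub).trans card_image_le

end Sources

section Uncovered

variable {I J : Type*} [Fintype J] [DecidableEq J] {M : Finset (I × J)}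

/-- The set `U` of items not covered by `M`. -/
def uncovered (M : Finset (I × J)) : Finset J :=
  {j | ∀ e ∈ M, e.2 ≠ j}

theorem mem_uncovered {j : J} : j ∈ uncovered M ↔ ∀ e ∈ M, e.2 ≠ j :=
  mem_filter_univ j

theorem card_add_card_uncovered (hinj : Set.InjOn Prod.snd (M : Set (I × J))) :
    #M + #(uncovered M) = Fintype.card J := by
  have hcompl : uncovered M = (M.image Prod.snd)ᶜ := by
    ext j
    simp only [mem_uncovered, mem_compl, mem_image, not_exists, not_and, ne_eq]
  rw [hcompl, ← card_image_of_injOn hinj, card_add_card_compl]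

end Uncovered

section Matchings

variable {I J : Type*} [DecidableEq I] [DecidableEq J] {E M M₀ : Finset (I × J)} {c c₀ : I → ℕ}

theorem isBMatching_iff_injOn_snd :
    IsBMatching E M c ↔
      M ⊆ E ∧ (∀ i, #{e ∈ M | e.1 = i} ≤ c i) ∧ Set.InjOn Prod.snd (M : Set (I × J)) := by
  refine and_congr_right' (and_congr_right' ⟨fun h e he f hf hef => ?_, fun h j => ?_⟩)
  · exact card_le_one.1 (h f.2) e (mem_filter.2 ⟨he, hef⟩) f (mem_filter.2 ⟨hf, rfl⟩)
  · simp only [card_le_one, mem_filter]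
    exact fun e he f hf => h he.1 hf.1 (he.2.trans hf.2.symm)

theorem IsBMatching.injOn_snd (hM : IsBMatching E M c) :
    Set.InjOn Prod.snd (M : Set (I × J)) :=
  (isBMatching_iff_injOn_snd.1 hM).2.2

theorem IsBMatching.mono (hM : IsBMatching E M c) (h : M₀ ⊆ M) : IsBMatching E M₀ c :=
  ⟨h.trans hM.1, fun i => (card_le_card (filter_subset_filter _ h)).trans (hM.2.1 i),
    fun j => (card_le_card (filter_subset_filter _ h)).trans (hM.2.2 j)⟩

theorem IsBMatching.insert {i : I} {t : J} (hM : IsBMatching E M c) (hE : (i, t) ∈ E)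
    (hi : #{e ∈ M | e.1 = i} < c i) (ht : ∀ e ∈ M, e.2 ≠ t) :
    IsBMatching E (insert (i, t) M) c := by
  refine isBMatching_iff_injOn_snd.2 ⟨insert_subset hE hM.1, fun i' => ?_, ?_⟩
  · rw [filter_insert]
    split_ifs with h
    · obtain rfl : i = i' := h
      exact (card_insert_le _ _).trans hi
    · exact hM.2.1 i'
  · have hnot : (i, t) ∉ (M : Set (I × J)) := fun h => ht _ h rfl
    rw [coe_insert, Set.injOn_insert hnot]
    exact ⟨hM.injOn_snd, fun ⟨e, he, het⟩ => ht e he het⟩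

/-- The edge set obtained from `M` by taking the item `t` from the buyer `n` and giving it to `i`:
the flip of the first two edges of an augmenting path. -/
def reassign (M : Finset (I × J)) (t : J) (n i : I) : Finset (I × J) :=
  insert (i, t) (M.erase (n, t))

theorem mem_reassign_of_snd_ne {t : J} {n i : I} {e : I × J} (he : e.2 ≠ t) :
    e ∈ reassign M t n i ↔ e ∈ M := by
  have hne (b : I) : e ≠ (b, t) := fun h => he (congrArg Prod.snd h)
  rw [reassign, mem_insert, mem_erase, or_iff_right (hne i), and_iff_right (hne n)]

theorem card_reassign {t : J} {n i : I} (hn : (n, t) ∈ M) (hi : (i, t) ∉ M) :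
    #(reassign M t n i) = #M := by
  rw [reassign, card_insert_of_notMem (fun h => hi (mem_of_mem_erase h)),
    card_erase_add_one hn]

theorem card_filter_fst_reassign_lt {t : J} {n i : I} (hn : (n, t) ∈ M) (hne : i ≠ n) :
    #{e ∈ reassign M t n i | e.1 = n} < #{e ∈ M | e.1 = n} := by
  rw [reassign, filter_insert, if_neg hne, filter_erase]
  exact card_erase_lt_of_mem (mem_filter.2 ⟨hn, rfl⟩)

theorem IsBMatching.reassign {t : J} {n i : I} (hM : IsBMatching E M c) (hn : (n, t) ∈ M)
    (hE : (i, t) ∈ E) (hi : #{e ∈ M | e.1 = i} < c i) : IsBMatching E (reassign M t n i) c := by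
  have hsub : M.erase (n, t) ⊆ M := erase_subset _ _
  refine (hM.mono hsub).insert hE
    ((card_le_card (filter_subset_filter _ hsub)).trans_lt hi) fun e he het => ?_
  exact ne_of_mem_erase he (hM.injOn_snd (hsub he) hn het)

theorem IsAltPath.tail_reassign {h : ℕ} {y : Fin (h + 2) → I} {z : Fin (h + 2) → J}
    (hp : IsAltPath E M y z) :
    IsAltPath E (reassign M (z 0) (y 1) (y 0)) (Fin.tail y) (Fin.tail z) where
  __ := hp.tail
  notMem k := by
    rw [mem_reassign_of_snd_ne (hp.injective_snd.ne (Fin.succ_ne_zero k))]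
    exact hp.tail.notMem k
  mem k := by
    rw [mem_reassign_of_snd_ne (hp.injective_snd.ne (Fin.succ_ne_zero k.castSucc))]
    exact hp.tail.mem k

theorem IsBMatching.exists_card_lt_of_isAltPath {h : ℕ} {y : Fin (h + 1) → I}
    {z : Fin (h + 1) → J} (hM : IsBMatching E M c) (hp : IsAltPath E M y z)
    (hfree : #{e ∈ M | e.1 = y 0} < c (y 0)) (hlast : ∀ e ∈ M, e.2 ≠ z (Fin.last h)) :
    ∃ M', IsBMatching E M' c ∧ #M < #M' := by
  induction h generalizing M with
  | zero =>
    exact ⟨_, hM.insert (hp.mem_edges 0) hfree hlast, card_lt_card (ssubset_insert (hp.notMem 0))⟩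
  | succ h ih =>
    have hmem : (y 1, z 0) ∈ M := hp.mem 0
    have hne : y 0 ≠ y 1 := hp.injective_fst.ne Fin.zero_ne_one
    rw [← card_reassign hmem (hp.notMem 0)]
    refine ih (hM.reassign hmem (hp.mem_edges 0) hfree) hp.tail_reassign
      ((card_filter_fst_reassign_lt hmem hne).trans_le (hM.2.1 _)) fun e he het => ?_
    have hz : e.2 ≠ z 0 := het ▸ hp.injective_snd.ne (Fin.succ_ne_zero (Fin.last h))
    exact hlast e ((mem_reassign_of_snd_ne hz).1 he) het

theorem IsBMatching.le_card_of_isAugPath {i : I} {j : J} (hM : IsBMatching E M c)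
    (hmax : ∀ M', IsBMatching E M' c → #M' ≤ #M) (hj : ∀ e ∈ M, e.2 ≠ j)
    (hp : IsAugPath E M i j) : c i ≤ #{e ∈ M | e.1 = i} := by
  obtain ⟨h, y, z, hyz, rfl, rfl⟩ := isAugPath_iff_exists_isAltPath.1 hp
  by_contra! hfree
  obtain ⟨M', hM', hlt⟩ := hM.exists_card_lt_of_isAltPath hyz hfree hj
  exact (hmax M' hM').not_gt hlt

theorem card_filter_mem_augSources_le (hdeg₀ : ∀ i, #{e ∈ M₀ | e.1 = i} ≤ c₀ i)
    (hM : IsBMatching E M c) (hmax : ∀ M', IsBMatching E M' c → #M' ≤ #M) :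
    #{e ∈ M₀ | e.1 ∈ augSources E M} ≤
      #{e ∈ M | e.1 ∈ augSources E M} + ∑ i ∈ augSources E M, (c₀ i - c i) := by
  simp only [← sum_card_fiberwise_eq_card_filter, ← sum_add_distrib]
  refine sum_le_sum fun i hi => ?_
  obtain ⟨j, hj, hp⟩ := mem_augSources.1 hi
  have hsat : c i ≤ #{e ∈ M | e.1 = i} := hM.le_card_of_isAugPath hmax hj hp
  have hcap : #{e ∈ M₀ | e.1 = i} ≤ c₀ i := hdeg₀ i
  omega

theorem IsBMatching.card_le_card_add_sum_augSources (hM₀ : IsBMatching E M₀ c₀)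
    (hM : IsBMatching E M c) (hmax : ∀ M', IsBMatching E M' c → #M' ≤ #M) :
    #M₀ ≤ #M + ∑ i ∈ augSources E M, (c₀ i - c i) := by
  have hin := card_filter_mem_augSources_le hM₀.2.1 hM hmax
  have hout := card_filter_notMem_augSources_le hM.injOn_snd hM₀.1 hM₀.injOn_snd
  rw [← card_filter_add_card_filter_not (s := M₀) (fun e => e.1 ∈ augSources E M),
    ← card_filter_add_card_filter_not (s := M) (fun e => e.1 ∈ augSources E M)]
  omega

/-- Truncated subtraction is intended: a buyer without excess capacity contributes nothing, and so
cannot offset the excess of another. -/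
theorem uncovered_le_neighbours_general [Fintype J] (hM₀ : IsBMatching E M₀ c₀)
    (hM : IsBMatching E M c) (hmax : ∀ M', IsBMatching E M' c → #M' ≤ #M) :
    #(uncovered M) ≤ ∑ i ∈ augSources E M, (c₀ i - c i) + #(uncovered M₀) := by
  have hle := hM₀.card_le_card_add_sum_augSources hM hmax
  have hcard₀ := card_add_card_uncovered hM₀.injOn_snd
  have hcard := card_add_card_uncovered hM.injOn_snd
  omega

end Matchings

/-- if capacities satisfy `c i ≤ c' i + 1`, some B-matching with
capacities `c` covers every item, and `M` is a maximum B-matching with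
capacities `c'`, then the set `U` of items uncovered by `M` satisfies
`|U| ≤ |N(U)|`, where `N(U)` is the set of buyers having an `M`-augmenting
path to some item of `U`. -/
theorem uncovered_le_neighbours
    {I J : Type*} [Fintype I] [Fintype J] [DecidableEq I] [DecidableEq J]
    (E : Finset (I × J)) (c c' : I → ℕ) (hcc : ∀ i, c i ≤ c' i + 1)
    (hfull : ∃ M0, IsBMatching E M0 c ∧ ∀ j : J, ∃ e ∈ M0, e.2 = j)
    (M : Finset (I × J)) (hM : IsBMatching E M c')
    (hmax : ∀ M', IsBMatching E M' c' → M'.card ≤ M.card) :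
    (Finset.univ.filter (fun j : J => ∀ e ∈ M, e.2 ≠ j)).card ≤
      (Finset.univ.filter
        (fun i : I => ∃ j : J, (∀ e ∈ M, e.2 ≠ j) ∧ IsAugPath E M i j)).card := by
  obtain ⟨M0, hM0, hcov⟩ := hfull
  have hU : ({j : J | ∀ e ∈ M, e.2 ≠ j} : Finset J) = uncovered M := by
    ext j
    rw [mem_filter_univ, mem_uncovered]
  have hN : ({i : I | ∃ j : J, (∀ e ∈ M, e.2 ≠ j) ∧ IsAugPath E M i j} : Finset I) =
      augSources E M := by
    ext i
    rw [mem_filter_univ, mem_augSources]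
  have hU₀ : uncovered M0 = ∅ := by
    simpa [eq_empty_iff_forall_notMem, mem_uncovered] using hcov
  rw [hU, hN]
  calc #(uncovered M)
      ≤ ∑ i ∈ augSources E M, (c i - c' i) + #(uncovered M0) :=
        uncovered_le_neighbours_general hM0 hM hmax
    _ = ∑ i ∈ augSources E M, (c i - c' i) := by rw [hU₀, card_empty, add_zero]
    _ ≤ ∑ _i ∈ augSources E M, 1 := sum_le_sum fun i _ => Nat.sub_le_iff_le_add'.2 (hcc i)
    _ = #(augSources E M) := (card_eq_sum_ones _).symm
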